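/- Let G be a bipartite graph, let R=K[y_α : α a basic 1-cover of G] be the polynomial ring over K whose variables are indexed by the basic 1-covers of G, and let Φ:R→Ā(G) be the K-algebra homomorphism sending y_α to the class of x_1^{α(1)}⋯x_n^{α(n)}t in Ā(G). Then ker Φ is generated by the set of polynomials y_α y_β − y_{α⊓β} y_{α⊔β}, for α,β ranging over incomparable pairs of basic 1-covers such that both α⊓β and α⊔β are basic 1-covers, together with the monomials y_α y_β for incomparable pairs α,β such that α⊓β or α⊔β fails to be a basic 1-cover. -/

import Mathlib

set_option synthInstance.maxHeartbeats 1000000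
set_option maxHeartbeats 1000000

open MvPolynomial

/-- A `k`-cover of a graph `G`. -/
def IsCover {n : ℕ} (G : SimpleGraph (Fin n)) (k : ℕ) (α : Fin n → ℕ) : Prop :=
  ∀ ⦃i j : Fin n⦄, G.Adj i j → k ≤ α i + α j

/-- A basic `k`-cover. -/
def IsBasicCover {n : ℕ} (G : SimpleGraph (Fin n)) (k : ℕ) (α : Fin n → ℕ) : Prop :=
  IsCover G k α ∧ ∀ β : Fin n → ℕ, β ≤ α → IsCover G k β → β = α

/-- The polynomial ring `S[t] = K[x_1,…,x_n][t]`, realised as a polynomial ring in the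
variables `some i ↦ x_i` and `none ↦ t`. -/
abbrev St (K : Type*) [Field K] (n : ℕ) := MvPolynomial (Option (Fin n)) K

/-- The element `x₁^{α 1} ⋯ x_n^{α n} · t^k` of `S[t]`. -/
noncomputable def coverMonomial (K : Type*) [Field K] {n : ℕ} (α : Fin n → ℕ) (k : ℕ) :
    St K n :=
  MvPolynomial.monomial (Finsupp.equivFunOnFinite.symm (fun o => o.elim k α)) 1

/-- The symbolic Rees algebra `A(G) = ⊕_k J(G)^{(k)} t^k = K[x^α t^k : α a k-cover]` of the
cover ideal of `G`, as a subalgebra of `S[t]`. -/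
noncomputable def symbolicRees (K : Type*) [Field K] {n : ℕ} (G : SimpleGraph (Fin n)) :
    Subalgebra K (St K n) :=
  Algebra.adjoin K {p | ∃ k : ℕ, ∃ α : Fin n → ℕ, IsCover G k α ∧ p = coverMonomial K α k}

/-- The ideal `m·A(G)` of `A(G)`, generated by the variables `x_i = x_i t^0`. -/
noncomputable def irrelevantIdeal (K : Type*) [Field K] {n : ℕ} (G : SimpleGraph (Fin n)) :
    Ideal (symbolicRees K G) :=
  Ideal.span {a : symbolicRees K G | ∃ i : Fin n, (a : St K n) = MvPolynomial.X (some i)}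

/-- The symbolic fiber cone `Ā(G) = A(G)/mA(G)` of the cover ideal of `G`. -/
noncomputable def symbolicFiberCone (K : Type*) [Field K] {n : ℕ}
    (G : SimpleGraph (Fin n)) : Type _ :=
  symbolicRees K G ⧸ irrelevantIdeal K G

noncomputable instance (K : Type*) [Field K] {n : ℕ} (G : SimpleGraph (Fin n)) :
    CommRing (symbolicFiberCone K G) :=
  Ideal.Quotient.commRing (irrelevantIdeal K G)

/-- The partial order on basic 1-covers of a bipartite graph with parts `A` and `Aᶜ`. -/
def pLe {n : ℕ} (A : Finset (Fin n)) (α β : Fin n → ℕ) : Prop :=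
  ∀ a ∈ A, α a ≤ β a

/-- `α ⊓ β`: minimum on `A`, maximum on the complement of `A`. -/
def sqcap {n : ℕ} (A : Finset (Fin n)) (α β : Fin n → ℕ) : Fin n → ℕ :=
  fun v => if v ∈ A then min (α v) (β v) else max (α v) (β v)

/-- `α ⊔ β`: maximum on `A`, minimum on the complement of `A`. -/
def sqcup {n : ℕ} (A : Finset (Fin n)) (α β : Fin n → ℕ) : Fin n → ℕ :=
  fun v => if v ∈ A then max (α v) (β v) else min (α v) (β v)

/-- The set `P(G)` of basic 1-covers of `G`. -/
def BasicOneCover {n : ℕ} (G : SimpleGraph (Fin n)) : Type _ :=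
  {α : Fin n → ℕ // IsBasicCover G 1 α}

noncomputable instance (K : Type*) [Field K] {n : ℕ} (G : SimpleGraph (Fin n)) :
    Algebra K (symbolicFiberCone K G) :=
  Ideal.Quotient.algebra K

/-- The natural presentation `Φ : R = K[P(G)] → Ā(G)`, sending the variable indexed by a
basic 1-cover `α` to the residue class of `x_1^{α 1} ⋯ x_n^{α n} t`. -/
noncomputable def Phi (K : Type*) [Field K] {n : ℕ} (G : SimpleGraph (Fin n)) :
    MvPolynomial (BasicOneCover G) K →ₐ[K] symbolicFiberCone K G :=
  MvPolynomial.aeval fun α : BasicOneCover G =>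
    Ideal.Quotient.mk (irrelevantIdeal K G)
      ⟨coverMonomial K α.1 1, Algebra.subset_adjoin ⟨1, α.1, α.2.1, rfl⟩⟩

/-- The straightening relations: for each pair `α`, `β` of incomparable basic 1-covers, the
relation `y_α y_β − y_{α⊓β} y_{α⊔β}` if both `α⊓β` and `α⊔β` are basic 1-covers, and the
monomial `y_α y_β` otherwise. -/
noncomputable def straighteningRelations (K : Type*) [Field K] {n : ℕ}
    (G : SimpleGraph (Fin n)) (A : Finset (Fin n)) :
    Set (MvPolynomial (BasicOneCover G) K) :=
  {p | ∃ α β : BasicOneCover G, ¬ pLe A α.1 β.1 ∧ ¬ pLe A β.1 α.1 ∧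
    ((∃ (h1 : IsBasicCover G 1 (sqcap A α.1 β.1)) (h2 : IsBasicCover G 1 (sqcup A α.1 β.1)),
        p = MvPolynomial.X α * MvPolynomial.X β -
          MvPolynomial.X (⟨sqcap A α.1 β.1, h1⟩ : BasicOneCover G) *
          MvPolynomial.X (⟨sqcup A α.1 β.1, h2⟩ : BasicOneCover G)) ∨
     ((¬ IsBasicCover G 1 (sqcap A α.1 β.1) ∨ ¬ IsBasicCover G 1 (sqcup A α.1 β.1)) ∧
        p = MvPolynomial.X α * MvPolynomial.X β))}

/-!
The residue class of `x^α t^k` in `Ā(G)` is nonzero exactly when `α` is a basic `k`-cover, and the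
classes of the monomials given by basic covers are linearly independent. Since
`α + β = α ⊓ β + α ⊔ β`, where `α ⊓ β` and `α ⊔ β` are again 1-covers, and since a summand of a
basic cover is basic, the straightening relations lie in `ker Φ`.

Conversely, the relations rewrite every monomial as zero or as a standard monomial, that is, one
supported on a chain of `P(G)`; the sum of `|{a ∈ A | α a = 1}| * |{a ∈ A | α a = 0}|` over the
factors drops at each step. The sum of a chain of `k` basic 1-covers is a basic `k`-cover, from
which the chain can be recovered by splitting off its least element. So `Φ` sends the standard
monomials to distinct elements of a linearly independent family.
-/

section Covers

variable {n : ℕ} {G : SimpleGraph (Fin n)} {k l : ℕ} {α β : Fin n → ℕ}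

lemma IsCover.mono (hα : IsCover G k α) (hle : α ≤ β) : IsCover G k β := fun i j hij =>
  (hα hij).trans (Nat.add_le_add (hle i) (hle j))

lemma IsCover.add (hα : IsCover G k α) (hβ : IsCover G l β) : IsCover G (k + l) (α + β) :=
  fun i j hij => by
    have := hα hij
    have := hβ hij
    simp only [Pi.add_apply]
    omega

lemma IsCover.sub_single_one (hα : IsCover G k α) {v : Fin n} (hv : α v ≠ 0)
    (hloose : ∀ w, G.Adj v w → α v + α w ≠ k) : IsCover G k (α - Pi.single v 1) := by
  intro i j hij
  have hcover := hα hij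
  simp only [Pi.sub_apply]
  rcases eq_or_ne i v with rfl | hi
  · have := hloose j hij
    rw [Pi.single_eq_same, Pi.single_eq_of_ne hij.ne']
    omega
  · rcases eq_or_ne j v with rfl | hj
    · have := hloose i hij.symm
      rw [Pi.single_eq_same, Pi.single_eq_of_ne hi]
      omega
    · rw [Pi.single_eq_of_ne hi, Pi.single_eq_of_ne hj]
      omega

lemma single_one_le_of_ne_zero {v : Fin n} (hv : α v ≠ 0) : Pi.single v 1 ≤ α :=
  update_le_iff.mpr ⟨Nat.one_le_iff_ne_zero.mpr hv, fun _ _ => Nat.zero_le _⟩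

lemma isBasicCover_iff_forall_exists_tight :
    IsBasicCover G k α ↔
      IsCover G k α ∧ ∀ v, α v ≠ 0 → ∃ w, G.Adj v w ∧ α v + α w = k := by
  refine and_congr_right fun hα => ⟨fun hmin v hv => ?_, fun htight β hle hβ => ?_⟩
  · by_contra! hloose
    have := congrFun (hmin _ tsub_le_self (hα.sub_single_one hv hloose)) v
    simp only [Pi.sub_apply, Pi.single_eq_same] at this
    omega
  · refine le_antisymm hle fun v => ?_
    by_cases hv : α v = 0
    · exact hv ▸ Nat.zero_le _
    · obtain ⟨w, hvw, hsum⟩ := htight v hv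
      have hcover := hβ hvw
      have hlew : β w ≤ α w := hle w
      change α v ≤ β v
      omega

lemma IsBasicCover.exists_tight (hα : IsBasicCover G k α) {v : Fin n} (hv : α v ≠ 0) :
    ∃ w, G.Adj v w ∧ α v + α w = k :=
  (isBasicCover_iff_forall_exists_tight.mp hα).2 v hv

lemma IsBasicCover.le (hα : IsBasicCover G k α) (v : Fin n) : α v ≤ k := by
  by_cases hv : α v = 0
  · exact hv ▸ Nat.zero_le _
  · obtain ⟨w, -, hsum⟩ := hα.exists_tight hv
    omega

lemma IsCover.exists_eq_add_single_of_not_isBasicCover (hα : IsCover G k α)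
    (hbasic : ¬ IsBasicCover G k α) :
    ∃ (β : Fin n → ℕ) (v : Fin n), IsCover G k β ∧ α = β + Pi.single v 1 := by
  rw [isBasicCover_iff_forall_exists_tight] at hbasic
  push Not at hbasic
  obtain ⟨v, hv, hloose⟩ := hbasic hα
  exact ⟨_, v, hα.sub_single_one hv hloose,
    (tsub_add_cancel_of_le (single_one_le_of_ne_zero hv)).symm⟩

lemma IsBasicCover.of_add_left (hα : IsCover G k α) (hβ : IsCover G l β)
    (h : IsBasicCover G (k + l) (α + β)) : IsBasicCover G k α :=
  ⟨hα, fun _ hle hγ => add_right_cancel (h.2 _ (add_le_add_left hle β) (hγ.add hβ))⟩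

lemma IsBasicCover.of_add_right (hα : IsCover G k α) (hβ : IsCover G l β)
    (h : IsBasicCover G (k + l) (α + β)) : IsBasicCover G l β := by
  rw [add_comm k, add_comm α] at h
  exact h.of_add_left hβ hα

end Covers

section Lattice

lemma isBipartiteWith_compl {V : Type*} [Fintype V] [DecidableEq V] {G : SimpleGraph V}
    {A : Finset V} (h : ∀ v w, G.Adj v w → (v ∈ A ↔ w ∉ A)) :
    G.IsBipartiteWith (A : Set V) (Aᶜ : Finset V) where
  disjoint := Finset.disjoint_coe.mpr disjoint_compl_right
  mem_of_adj v w hvw := by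
    have := h v w hvw
    simp only [Finset.mem_coe, Finset.mem_compl]
    tauto

variable {n : ℕ} {G : SimpleGraph (Fin n)} {A B : Finset (Fin n)} {k : ℕ} {α β : Fin n → ℕ}

lemma sqcap_comm (A : Finset (Fin n)) (α β : Fin n → ℕ) : sqcap A α β = sqcap A β α := by
  funext v
  simp only [sqcap, min_comm, max_comm]

lemma sqcap_add_sqcup (A : Finset (Fin n)) (α β : Fin n → ℕ) :
    sqcap A α β + sqcup A α β = α + β := by
  funext v
  simp only [sqcap, sqcup, Pi.add_apply]
  split_ifs
  · exact min_add_max _ _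
  · exact max_add_min _ _

lemma isCover_sqcap (hG : G.IsBipartiteWith (A : Set (Fin n)) B) (hα : IsCover G k α)
    (hβ : IsCover G k β) : IsCover G k (sqcap A α β) := by
  intro i j hij
  have hαij := hα hij
  have hβij := hβ hij
  rcases hG.mem_of_adj hij with ⟨hi, hj⟩ | ⟨hi, hj⟩
  · have hjA : j ∉ A := hG.disjoint.notMem_of_mem_right hj
    simp only [sqcap, if_pos (Finset.mem_coe.mp hi), if_neg hjA]
    omega
  · have hiA : i ∉ A := hG.disjoint.notMem_of_mem_right hi
    simp only [sqcap, if_pos (Finset.mem_coe.mp hj), if_neg hiA]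
    omega

lemma isCover_sqcup (hG : G.IsBipartiteWith (A : Set (Fin n)) B) (hα : IsCover G k α)
    (hβ : IsCover G k β) : IsCover G k (sqcup A α β) := by
  intro i j hij
  have hαij := hα hij
  have hβij := hβ hij
  rcases hG.mem_of_adj hij with ⟨hi, hj⟩ | ⟨hi, hj⟩
  · have hjA : j ∉ A := hG.disjoint.notMem_of_mem_right hj
    simp only [sqcup, if_pos (Finset.mem_coe.mp hi), if_neg hjA]
    omega
  · have hiA : i ∉ A := hG.disjoint.notMem_of_mem_right hi
    simp only [sqcup, if_pos (Finset.mem_coe.mp hj), if_neg hiA]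
    omega

lemma pLe.swap (hG : G.IsBipartiteWith (A : Set (Fin n)) B) (hα : IsCover G k α)
    (hβ : IsBasicCover G k β) (h : pLe A α β) : pLe B β α := by
  intro b hb
  by_cases hv : β b = 0
  · exact hv ▸ Nat.zero_le _
  · obtain ⟨a, hba, hsum⟩ := hβ.exists_tight hv
    have := h a (hG.symm.mem_of_mem_adj hb hba)
    have := hα hba
    omega

lemma pLe.antisymm (hG : G.IsBipartiteWith (A : Set (Fin n)) B) (hα : IsBasicCover G k α)
    (hβ : IsBasicCover G k β) (h : pLe A α β) (h' : pLe A β α) : α = β := by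
  refine hβ.2 α (fun v => ?_) hα.1
  by_cases hv : α v = 0
  · exact hv ▸ Nat.zero_le _
  · obtain ⟨w, hvw, -⟩ := hα.exists_tight hv
    rcases hG.mem_of_adj hvw with ⟨hvA, -⟩ | ⟨hvB, -⟩
    · exact h v hvA
    · exact h'.swap hG hβ.1 hα v hvB

end Lattice

section Defect

variable {n : ℕ} {A : Finset (Fin n)} {α β : Fin n → ℕ}

lemma mul_tsub_add_mul_tsub_lt {N a b p q : ℕ} (hsum : p + q = a + b) (hpa : p < a) (hpb : p < b)
    (hq : q ≤ N) : p * (N - p) + q * (N - q) < a * (N - a) + b * (N - b) := by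
  obtain ⟨c, rfl⟩ := Nat.exists_eq_add_of_lt hpa
  obtain ⟨d, rfl⟩ := Nat.exists_eq_add_of_lt hpb
  obtain rfl : q = p + c + d + 2 := by omega
  obtain ⟨e, rfl⟩ := Nat.exists_eq_add_of_le hq
  rw [show p + c + d + 2 + e - p = c + d + 2 + e by omega,
    show p + c + d + 2 + e - (p + c + d + 2) = e by omega,
    show p + c + d + 2 + e - (p + c + 1) = d + 1 + e by omega,
    show p + c + d + 2 + e - (p + d + 1) = c + 1 + e by omega]
  calc
    p * (c + d + 2 + e) + (p + c + d + 2) * e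
      < p * (c + d + 2 + e) + (p + c + d + 2) * e + 2 * ((c + 1) * (d + 1)) :=
        Nat.lt_add_of_pos_right (by positivity)
    _ = (p + c + 1) * (d + 1 + e) + (p + d + 1) * (c + 1 + e) := by ring

/-- The rank of `α` in `P(G)`: for a basic 1-cover, the number of `a ∈ A` with `α a = 1`. -/
def rankOn (A : Finset (Fin n)) (α : Fin n → ℕ) : ℕ := ∑ a ∈ A, α a

lemma rankOn_le_card (hα : ∀ a ∈ A, α a ≤ 1) : rankOn A α ≤ A.card := by
  simpa [rankOn] using Finset.sum_le_card_nsmul A α 1 hα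

lemma rankOn_sqcap_add_rankOn_sqcup (A : Finset (Fin n)) (α β : Fin n → ℕ) :
    rankOn A (sqcap A α β) + rankOn A (sqcup A α β) = rankOn A α + rankOn A β := by
  simp only [rankOn, ← Finset.sum_add_distrib]
  exact Finset.sum_congr rfl fun a _ => congrFun (sqcap_add_sqcup A α β) a

lemma rankOn_sqcap_lt_left (h : ¬ pLe A α β) : rankOn A (sqcap A α β) < rankOn A α := by
  unfold pLe at h
  push Not at h
  obtain ⟨a, ha, hlt⟩ := h
  refine Finset.sum_lt_sum (fun b hb => ?_) ⟨a, ha, ?_⟩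
  · simp [sqcap, hb]
  · simpa [sqcap, ha] using hlt

/-- The termination measure of straightening: for a basic 1-cover, the number of pairs in `A × A`
on which `α` takes the values `(1, 0)`. -/
def defect (A : Finset (Fin n)) (α : Fin n → ℕ) : ℕ := rankOn A α * (A.card - rankOn A α)

lemma defect_sqcap_add_defect_sqcup_lt (hα : ∀ a ∈ A, α a ≤ 1) (hβ : ∀ a ∈ A, β a ≤ 1)
    (hαβ : ¬ pLe A α β) (hβα : ¬ pLe A β α) :
    defect A (sqcap A α β) + defect A (sqcup A α β) < defect A α + defect A β := by
  refine mul_tsub_add_mul_tsub_lt (rankOn_sqcap_add_rankOn_sqcup A α β)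
    (rankOn_sqcap_lt_left hαβ) ?_ (rankOn_le_card fun a ha => ?_)
  · rw [sqcap_comm]
    exact rankOn_sqcap_lt_left hβα
  · simpa [sqcup, ha] using ⟨hα a ha, hβ a ha⟩

end Defect

section Standard

variable {n : ℕ} {G : SimpleGraph (Fin n)} {A B : Finset (Fin n)} {s t : BasicOneCover G →₀ ℕ}

/-- The sum of a multiset of basic 1-covers, the multiset being encoded as the exponent vector of a
monomial in `K[P(G)]`. -/
noncomputable def coverSum : (BasicOneCover G →₀ ℕ) →+ (Fin n → ℕ) :=
  Finsupp.weight fun α : BasicOneCover G => α.1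

lemma coverSum_apply (s : BasicOneCover G →₀ ℕ) (v : Fin n) :
    coverSum s v = ∑ α ∈ s.support, s α * α.1 v := by
  simp [coverSum, Finsupp.weight_apply, Finsupp.sum]

lemma coverSum_apply_eq_zero_iff {v : Fin n} :
    coverSum s v = 0 ↔ ∀ α ∈ s.support, α.1 v = 0 := by
  rw [coverSum_apply, Finset.sum_eq_zero_iff]
  refine forall₂_congr fun α hα => ?_
  rw [mul_eq_zero, or_iff_right (Finsupp.mem_support_iff.mp hα)]

@[simp] lemma coverSum_single (α : BasicOneCover G) (m : ℕ) :
    coverSum (Finsupp.single α m) = m • α.1 := by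
  simp [coverSum, Finsupp.weight_single]

lemma isCover_coverSum (s : BasicOneCover G →₀ ℕ) : IsCover G s.degree (coverSum s) := by
  intro v w hvw
  simp only [coverSum_apply, Finsupp.degree_apply, ← Finset.sum_add_distrib, ← mul_add]
  exact Finset.sum_le_sum fun α _ => Nat.le_mul_of_pos_right _ (α.2.1 hvw)

lemma coverSum_add_coverSum_eq_degree {v w : Fin n}
    (h : ∀ α ∈ s.support, α.1 v + α.1 w = 1) : coverSum s v + coverSum s w = s.degree := by
  simp only [coverSum_apply, Finsupp.degree_apply, ← Finset.sum_add_distrib, ← mul_add]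
  exact Finset.sum_congr rfl fun α hα => by rw [h α hα, mul_one]

/-- A monomial of `K[P(G)]` with exponent vector `s` is standard if the variables dividing it form
a chain of `P(G)`. -/
def IsStandard (A : Finset (Fin n)) (s : BasicOneCover G →₀ ℕ) : Prop :=
  IsChain (fun α β : BasicOneCover G => pLe A α.1 β.1) s.support

lemma IsStandard.swap (hG : G.IsBipartiteWith (A : Set (Fin n)) B) (hs : IsStandard A s) :
    IsStandard B s := fun α hα β hβ hne =>
  (hs hα hβ hne).symm.imp (fun h => h.swap hG β.2.1 α.2) fun h => h.swap hG α.2.1 β.2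

lemma IsStandard.of_le (hs : IsStandard A s) (h : t ≤ s) : IsStandard A t :=
  IsChain.mono (Finset.coe_subset.mpr (Finsupp.support_mono h)) hs

lemma IsStandard.exists_least (hs : IsStandard A s) {T : Finset (BasicOneCover G)}
    (hT : T ⊆ s.support) (hne : T.Nonempty) : ∃ α ∈ T, ∀ β ∈ T, pLe A α.1 β.1 := by
  obtain ⟨α, hα, hmin⟩ := T.exists_minimalFor (fun α => A.restrict α.1) hne
  refine ⟨α, hα, fun β hβ => ?_⟩
  rcases eq_or_ne α β with rfl | hαβ
  · exact fun _ _ => le_rfl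
  · rcases hs (hT hα) (hT hβ) hαβ with h | h
    · exact h
    · exact fun a ha => hmin hβ (fun a => h a a.2) ⟨a, ha⟩

-- An edge at `v` that is tight for the least element positive at `v` is tight for the whole chain.
lemma IsStandard.exists_tight_of_mem (hG : G.IsBipartiteWith (A : Set (Fin n)) B)
    (hs : IsStandard A s) {v : Fin n} (hvA : v ∈ A) (hv : coverSum s v ≠ 0) :
    ∃ w, G.Adj v w ∧ coverSum s v + coverSum s w = s.degree := by
  have hne : (s.support.filter fun α => α.1 v ≠ 0).Nonempty := by
    rw [Ne, coverSum_apply_eq_zero_iff] at hv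
    push Not at hv
    exact hv.imp fun α hα => Finset.mem_filter.mpr hα
  obtain ⟨α, hα, hleast⟩ := hs.exists_least (Finset.filter_subset _ _) hne
  have hαv : α.1 v ≠ 0 := (Finset.mem_filter.mp hα).2
  obtain ⟨w, hvw, htight⟩ := α.2.exists_tight hαv
  refine ⟨w, hvw, coverSum_add_coverSum_eq_degree fun β hβ => ?_⟩
  have hβcover := β.2.1 hvw
  have hβv := β.2.le v
  have hβw := β.2.le w
  by_cases hβ0 : β.1 v = 0
  · omega
  · have hle : pLe B β.1 α.1 :=
      (hleast β (Finset.mem_filter.mpr ⟨hβ, hβ0⟩)).swap hG α.2.1 β.2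
    have := hle w (hG.mem_of_mem_adj hvA hvw)
    omega

lemma IsStandard.isBasicCover_coverSum (hG : G.IsBipartiteWith (A : Set (Fin n)) B)
    (hs : IsStandard A s) : IsBasicCover G s.degree (coverSum s) := by
  refine isBasicCover_iff_forall_exists_tight.mpr ⟨isCover_coverSum s, fun v hv => ?_⟩
  obtain ⟨α, -, hαv⟩ : ∃ α ∈ s.support, α.1 v ≠ 0 := by
    simpa [coverSum_apply_eq_zero_iff] using hv
  obtain ⟨w, hvw, -⟩ := α.2.exists_tight hαv
  rcases hG.mem_of_adj hvw with ⟨hvA, -⟩ | ⟨hvB, -⟩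
  · exact hs.exists_tight_of_mem hG hvA hv
  · exact (hs.swap hG).exists_tight_of_mem hG.symm hvB hv

lemma IsStandard.exists_mem_support_forall_eq_zero_iff
    (hG : G.IsBipartiteWith (A : Set (Fin n)) B) (hs : IsStandard A s) (hs0 : s ≠ 0) :
    ∃ α ∈ s.support, ∀ b ∈ B, α.1 b = 0 ↔ coverSum s b = 0 := by
  obtain ⟨α, hα, hleast⟩ :=
    hs.exists_least subset_rfl (Finsupp.support_nonempty_iff.mpr hs0)
  refine ⟨α, hα, fun b hb => ?_⟩
  rw [coverSum_apply_eq_zero_iff]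
  refine ⟨fun hαb β hβ => ?_, fun h => h α hα⟩
  exact Nat.le_zero.mp (hαb ▸ (hleast β hβ).swap hG α.2.1 β.2 b hb)

lemma IsStandard.exists_mem_support_of_coverSum_eq
    (hG : G.IsBipartiteWith (A : Set (Fin n)) B) (hs : IsStandard A s) (ht : IsStandard A t)
    (hs0 : s ≠ 0) (ht0 : t ≠ 0) (hsum : coverSum s = coverSum t) :
    ∃ α, α ∈ s.support ∧ α ∈ t.support := by
  obtain ⟨α, hα, hαs⟩ := hs.exists_mem_support_forall_eq_zero_iff hG hs0
  obtain ⟨β, hβ, hβt⟩ := ht.exists_mem_support_forall_eq_zero_iff hG ht0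
  have hB : ∀ b ∈ B, α.1 b = β.1 b := fun b hb => by
    have hiff : α.1 b = 0 ↔ β.1 b = 0 := by rw [hαs b hb, hβt b hb, hsum]
    have := α.2.le b
    have := β.2.le b
    omega
  obtain rfl : α = β := Subtype.ext
    (pLe.antisymm hG.symm α.2 β.2 (fun b hb => (hB b hb).le) fun b hb => (hB b hb).ge)
  exact ⟨α, hα, hβ⟩

lemma exists_eq_single_one_add {ι : Type*} {s : ι →₀ ℕ} {i : ι} (hi : i ∈ s.support) :
    ∃ t, s = Finsupp.single i 1 + t :=
  exists_add_of_le <| Finsupp.single_le_iff.mpr <|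
    Nat.one_le_iff_ne_zero.mpr (Finsupp.mem_support_iff.mp hi)

lemma IsStandard.eq_of_coverSum_eq (hG : G.IsBipartiteWith (A : Set (Fin n)) B)
    (hs : IsStandard A s) (ht : IsStandard A t) (hdeg : s.degree = t.degree)
    (hsum : coverSum s = coverSum t) : s = t := by
  induction hk : s.degree generalizing s t with
  | zero =>
    rw [(Finsupp.degree_eq_zero_iff s).mp hk, (Finsupp.degree_eq_zero_iff t).mp (hdeg ▸ hk)]
  | succ k ih =>
    have hs0 : s ≠ 0 := by rintro rfl; simp at hk
    have ht0 : t ≠ 0 := by rintro rfl; simp [hdeg] at hk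
    obtain ⟨α, hαs, hαt⟩ := hs.exists_mem_support_of_coverSum_eq hG ht hs0 ht0 hsum
    obtain ⟨s', rfl⟩ := exists_eq_single_one_add hαs
    obtain ⟨t', rfl⟩ := exists_eq_single_one_add hαt
    simp only [map_add, Finsupp.degree_single, add_right_inj] at hdeg hsum hk
    rw [ih (hs.of_le le_add_self) (ht.of_le le_add_self) hdeg hsum (by omega)]

lemma exists_incomparable_of_not_isStandard (hs : ¬ IsStandard A s) :
    ∃ (α β : BasicOneCover G) (r : BasicOneCover G →₀ ℕ), ¬ pLe A α.1 β.1 ∧ ¬ pLe A β.1 α.1 ∧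
      s = Finsupp.single α 1 + (Finsupp.single β 1 + r) := by
  classical
  unfold IsStandard IsChain Set.Pairwise at hs
  push Not at hs
  obtain ⟨α, hα, β, hβ, hne, hαβ, hβα⟩ := hs
  obtain ⟨s', rfl⟩ := exists_eq_single_one_add hα
  have hβ' : β ∈ s'.support := by simpa [hne] using hβ
  obtain ⟨r, rfl⟩ := exists_eq_single_one_add hβ'
  exact ⟨α, β, r, hαβ, hβα, rfl⟩

end Standard

section SymbolicRees

variable (K : Type*) [Field K] {n : ℕ} {G : SimpleGraph (Fin n)} {k l : ℕ} {α β : Fin n → ℕ}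

/-- The exponent vector of the monomial `x^α t^k` of `S[t]`. -/
noncomputable def coverExponent (α : Fin n → ℕ) (k : ℕ) : Option (Fin n) →₀ ℕ :=
  Finsupp.equivFunOnFinite.symm fun o => o.elim k α

@[simp] lemma coverExponent_none (α : Fin n → ℕ) (k : ℕ) : coverExponent α k none = k := rfl

@[simp] lemma coverExponent_some (α : Fin n → ℕ) (k : ℕ) (v : Fin n) :
    coverExponent α k (some v) = α v := rfl

@[simp] lemma coverExponent_comp_some (α : Fin n → ℕ) (k : ℕ) :
    ⇑(coverExponent α k) ∘ some = α := rfl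

lemma coverExponent_inj : coverExponent α k = coverExponent β l ↔ α = β ∧ k = l := by
  refine ⟨fun h => ⟨?_, ?_⟩, fun ⟨hα, hk⟩ => hα ▸ hk ▸ rfl⟩
  · rw [← coverExponent_comp_some α k, h, coverExponent_comp_some]
  · rw [← coverExponent_none α k, h, coverExponent_none]

lemma coverMonomial_eq_monomial (α : Fin n → ℕ) (k : ℕ) :
    coverMonomial K α k = monomial (coverExponent α k) 1 := rfl

lemma coverMonomial_mul (α β : Fin n → ℕ) (k l : ℕ) :
    coverMonomial K α k * coverMonomial K β l = coverMonomial K (α + β) (k + l) := by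
  rw [coverMonomial_eq_monomial, coverMonomial_eq_monomial, monomial_mul, one_mul]
  congr 2
  ext o
  cases o <;> rfl

lemma coverMonomial_pow (α : Fin n → ℕ) (k m : ℕ) :
    coverMonomial K α k ^ m = coverMonomial K (m • α) (m * k) := by
  rw [coverMonomial_eq_monomial, coverMonomial_eq_monomial, monomial_pow, one_pow]
  congr 2
  ext o
  cases o <;> rfl

lemma coverMonomial_zero : coverMonomial K (0 : Fin n → ℕ) 0 = 1 := by
  rw [coverMonomial_eq_monomial, ← C_1, C_apply]
  congr 2
  ext o
  cases o <;> rfl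

lemma coverMonomial_single_one (v : Fin n) :
    coverMonomial K (Pi.single v 1) 0 = X (some v) := by
  rw [coverMonomial_eq_monomial, X]
  congr 2
  ext o
  cases o with
  | none => simp
  | some w => simp [coverExponent, Pi.single_apply, Finsupp.single_apply, eq_comm]

/-- The monomial `x^α t^k` given by a `k`-cover `α`, as an element of `A(G)`. -/
noncomputable def reesMonomial (hα : IsCover G k α) : symbolicRees K G :=
  ⟨coverMonomial K α k, Algebra.subset_adjoin ⟨k, α, hα, rfl⟩⟩

@[simp] lemma coe_reesMonomial (hα : IsCover G k α) :
    (reesMonomial K hα : St K n) = coverMonomial K α k := rfl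

lemma reesMonomial_mem_irrelevantIdeal (hα : IsCover G k α) (hbasic : ¬ IsBasicCover G k α) :
    reesMonomial K hα ∈ irrelevantIdeal K G := by
  obtain ⟨β, v, hβ, rfl⟩ := hα.exists_eq_add_single_of_not_isBasicCover hbasic
  have hv : IsCover G 0 (Pi.single v 1) := fun _ _ _ => Nat.zero_le _
  have hmul : reesMonomial K hα = reesMonomial K hβ * reesMonomial K hv :=
    Subtype.ext (coverMonomial_mul K β (Pi.single v 1) k 0).symm
  rw [hmul]
  exact Ideal.mul_mem_left _ _ (Ideal.subset_span ⟨v, coverMonomial_single_one K v⟩)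

variable {K}

lemma isCover_of_mem_support {p : St K n} (hp : p ∈ symbolicRees K G)
    {m : Option (Fin n) →₀ ℕ} (hm : m ∈ p.support) : IsCover G (m none) (m ∘ some) := by
  classical
  induction hp using Algebra.adjoin_induction generalizing m with
  | mem p hp =>
    obtain ⟨k, α, hα, rfl⟩ := hp
    rw [coverMonomial_eq_monomial] at hm
    obtain rfl := Finset.mem_singleton.mp (support_monomial_subset hm)
    exact hα
  | algebraMap r =>
    obtain rfl := Finset.mem_singleton.mp (support_monomial_subset hm)
    exact fun _ _ _ => Nat.zero_le _
  | add p q _ _ hp hq => exact (Finset.mem_union.mp (support_add hm)).elim hp hq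
  | mul p q _ _ hp hq =>
    obtain ⟨a, ha, b, hb, rfl⟩ := Finset.mem_add.mp (support_mul p q hm)
    exact (hp ha).add (hq hb)

lemma not_isBasicCover_of_mem_support {p : symbolicRees K G} (hp : p ∈ irrelevantIdeal K G)
    {m : Option (Fin n) →₀ ℕ} (hm : m ∈ (p : St K n).support) :
    ¬ IsBasicCover G (m none) (m ∘ some) := by
  classical
  induction hp using Submodule.span_induction generalizing m with
  | mem p hp =>
    obtain ⟨v, hv⟩ := hp
    rw [hv, ← coverMonomial_single_one, coverMonomial_eq_monomial] at hm
    obtain rfl := Finset.mem_singleton.mp (support_monomial_subset hm)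
    intro hbasic
    simpa using hbasic.le v
  | zero => simp at hm
  | add p q _ _ hp hq => exact (Finset.mem_union.mp (support_add hm)).elim hp hq
  | smul r p _ hp =>
    obtain ⟨a, ha, b, hb, rfl⟩ := Finset.mem_add.mp (support_mul (r : St K n) p hm)
    exact fun hbasic => hp hb
      (hbasic.of_add_right (isCover_of_mem_support r.2 ha) (isCover_of_mem_support p.2 hb))

end SymbolicRees

section Presentation

variable (K : Type*) [Field K] {n : ℕ} {G : SimpleGraph (Fin n)} {A B : Finset (Fin n)}

/-- The lift `K[P(G)] → A(G)` of `Φ`. -/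
noncomputable def reesLift (G : SimpleGraph (Fin n)) :
    MvPolynomial (BasicOneCover G) K →ₐ[K] symbolicRees K G :=
  aeval fun α : BasicOneCover G => reesMonomial K α.2.1

@[simp] lemma reesLift_X (α : BasicOneCover G) :
    reesLift K G (X α) = reesMonomial K α.2.1 :=
  aeval_X _ α

lemma Phi_apply (p : MvPolynomial (BasicOneCover G) K) :
    Phi K G p = Ideal.Quotient.mk (irrelevantIdeal K G) (reesLift K G p) :=
  let π : symbolicRees K G →ₐ[K] symbolicFiberCone K G :=
    Ideal.Quotient.mkₐ K (irrelevantIdeal K G)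
  (comp_aeval_apply (fun α : BasicOneCover G => reesMonomial K α.2.1) π p).symm

lemma mem_ker_Phi {p : MvPolynomial (BasicOneCover G) K} :
    p ∈ RingHom.ker (Phi K G).toRingHom ↔ reesLift K G p ∈ irrelevantIdeal K G := by
  rw [RingHom.mem_ker, ← Ideal.Quotient.eq_zero_iff_mem, ← Phi_apply]
  rfl

lemma coe_reesLift_monomial_one (s : BasicOneCover G →₀ ℕ) :
    (reesLift K G (monomial s 1) : St K n) = coverMonomial K (coverSum s) s.degree := by
  induction s using Finsupp.induction_linear with
  | zero =>
    rw [map_zero, map_zero, coverMonomial_zero, ← C_apply, C_1, map_one, OneMemClass.coe_one]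
  | add s t hs ht =>
    rw [map_add, map_add, ← coverMonomial_mul, ← hs, ← ht, ← MulMemClass.coe_mul, ← map_mul,
      monomial_mul, one_mul]
  | single α m =>
    rw [← X_pow_eq_monomial, map_pow, reesLift_X, SubmonoidClass.coe_pow, coe_reesMonomial,
      coverMonomial_pow, coverSum_single, Finsupp.degree_single, mul_one]

lemma coe_reesLift_monomial (s : BasicOneCover G →₀ ℕ) (c : K) :
    (reesLift K G (monomial s c) : St K n) = monomial (coverExponent (coverSum s) s.degree) c := by
  rw [← mul_one c, ← smul_eq_mul, ← smul_monomial, map_smul, SetLike.val_smul,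
    coe_reesLift_monomial_one, coverMonomial_eq_monomial, smul_monomial]

lemma reesLift_X_mul_X_sub_X_mul_X {α β γ δ : BasicOneCover G} (h : α.1 + β.1 = γ.1 + δ.1) :
    reesLift K G (X α * X β - X γ * X δ) = 0 := by
  apply Subtype.ext
  simp only [map_sub, map_mul, reesLift_X, AddSubgroupClass.coe_sub, MulMemClass.coe_mul,
    coe_reesMonomial, coverMonomial_mul, h, sub_self, ZeroMemClass.coe_zero]

lemma reesLift_X_mul_X_mem_irrelevantIdeal (hG : G.IsBipartiteWith (A : Set (Fin n)) B)
    {α β : BasicOneCover G}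
    (h : ¬ IsBasicCover G 1 (sqcap A α.1 β.1) ∨ ¬ IsBasicCover G 1 (sqcup A α.1 β.1)) :
    reesLift K G (X α * X β) ∈ irrelevantIdeal K G := by
  have hcap : IsCover G 1 (sqcap A α.1 β.1) := isCover_sqcap hG α.2.1 β.2.1
  have hcup : IsCover G 1 (sqcup A α.1 β.1) := isCover_sqcup hG α.2.1 β.2.1
  have hnot : ¬ IsBasicCover G (1 + 1) (α.1 + β.1) := by
    rw [← sqcap_add_sqcup A]
    exact fun hbasic =>
      h.elim (· (hbasic.of_add_left hcap hcup)) (· (hbasic.of_add_right hcap hcup))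
  have hmul : reesLift K G (X α * X β) = reesMonomial K (α.2.1.add β.2.1) := by
    rw [map_mul, reesLift_X, reesLift_X]
    exact Subtype.ext (coverMonomial_mul K α.1 β.1 1 1)
  exact hmul ▸ reesMonomial_mem_irrelevantIdeal K _ hnot

lemma span_straighteningRelations_le_ker_Phi (hG : G.IsBipartiteWith (A : Set (Fin n)) B) :
    Ideal.span (straighteningRelations K G A) ≤ RingHom.ker (Phi K G).toRingHom := by
  rw [Ideal.span_le]
  rintro p ⟨α, β, -, -, ⟨hcap, hcup, rfl⟩ | ⟨h, rfl⟩⟩ <;> rw [SetLike.mem_coe, mem_ker_Phi]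
  · have hzero := reesLift_X_mul_X_sub_X_mul_X K (γ := ⟨_, hcap⟩) (δ := ⟨_, hcup⟩)
      (sqcap_add_sqcup A α.1 β.1).symm
    exact hzero.symm ▸ zero_mem (irrelevantIdeal K G)
  · exact reesLift_X_mul_X_mem_irrelevantIdeal K hG h

end Presentation

section Straightening

variable (K : Type*) [Field K] {n : ℕ} {G : SimpleGraph (Fin n)} {A B : Finset (Fin n)}

lemma monomial_single_one_add_single_one_add {σ R : Type*} [CommSemiring R] (i j : σ)
    (r : σ →₀ ℕ) :
    monomial (Finsupp.single i 1 + (Finsupp.single j 1 + r)) (1 : R) =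
      X i * X j * monomial r 1 := by
  rw [X, X, monomial_mul, monomial_mul, one_mul, one_mul, add_assoc]

lemma exists_monomial_sub_mem_span_of_not_isStandard {s : BasicOneCover G →₀ ℕ}
    (hs : ¬ IsStandard A s) :
    monomial s (1 : K) ∈ Ideal.span (straighteningRelations K G A) ∨
    ∃ t : BasicOneCover G →₀ ℕ,
      Finsupp.weight (fun α : BasicOneCover G => defect A α.1) t <
        Finsupp.weight (fun α : BasicOneCover G => defect A α.1) s ∧
      monomial s (1 : K) - monomial t 1 ∈ Ideal.span (straighteningRelations K G A) := by
  obtain ⟨α, β, r, hαβ, hβα, rfl⟩ := exists_incomparable_of_not_isStandard hs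
  by_cases hbasic : IsBasicCover G 1 (sqcap A α.1 β.1) ∧ IsBasicCover G 1 (sqcup A α.1 β.1)
  · obtain ⟨hcap, hcup⟩ := hbasic
    let γ : BasicOneCover G := ⟨_, hcap⟩
    let δ : BasicOneCover G := ⟨_, hcup⟩
    refine Or.inr ⟨Finsupp.single γ 1 + (Finsupp.single δ 1 + r), ?_, ?_⟩
    · have hlt := defect_sqcap_add_defect_sqcup_lt (fun a _ => α.2.le a) (fun a _ => β.2.le a)
        hαβ hβα
      simp only [map_add, Finsupp.weight_single, one_smul, ← add_assoc]
      exact Nat.add_lt_add_right hlt _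
    · rw [monomial_single_one_add_single_one_add, monomial_single_one_add_single_one_add, ← sub_mul]
      exact Ideal.mul_mem_right _ _
        (Ideal.subset_span ⟨α, β, hαβ, hβα, Or.inl ⟨hcap, hcup, rfl⟩⟩)
  · rw [monomial_single_one_add_single_one_add]
    exact Or.inl (Ideal.mul_mem_right _ _
      (Ideal.subset_span ⟨α, β, hαβ, hβα, Or.inr ⟨not_and_or.mp hbasic, rfl⟩⟩))

lemma monomial_mem_span_sup_restrictSupport (s : BasicOneCover G →₀ ℕ) :
    monomial s (1 : K) ∈ (Ideal.span (straighteningRelations K G A)).restrictScalars K ⊔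
      restrictSupport K {s | IsStandard A s} := by
  induction hN : Finsupp.weight (fun α : BasicOneCover G => defect A α.1) s
    using Nat.strong_induction_on generalizing s with
  | _ N ih =>
  by_cases hs : IsStandard A s
  · exact Submodule.mem_sup_right ((monomial_mem_restrictSupport K).mpr (Or.inl hs))
  · rcases exists_monomial_sub_mem_span_of_not_isStandard K hs with h | ⟨t, hlt, h⟩
    · exact Submodule.mem_sup_left h
    · rw [← sub_add_cancel (monomial s (1 : K)) (monomial t 1)]
      exact add_mem (Submodule.mem_sup_left h) (ih _ (hN ▸ hlt) t rfl)

lemma span_straighteningRelations_sup_restrictSupport_eq_top :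
    (Ideal.span (straighteningRelations K G A)).restrictScalars K ⊔
      restrictSupport K {s | IsStandard A s} = ⊤ := by
  rw [eq_top_iff, ← restrictSupport_univ, restrictSupport_eq_span, Submodule.span_le,
    Set.image_subset_iff]
  exact fun s _ => monomial_mem_span_sup_restrictSupport K s

end Straightening

section Independence

lemma mem_support_map_of_injOn {σ τ R : Type*} [CommSemiring R]
    {φ : MvPolynomial σ R →+ MvPolynomial τ R} {e : (σ →₀ ℕ) → τ →₀ ℕ}
    (hφ : ∀ s c, φ (monomial s c) = monomial (e s) c) {q : MvPolynomial σ R}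
    (he : Set.InjOn e q.support) {s : σ →₀ ℕ} (hs : s ∈ q.support) : e s ∈ (φ q).support := by
  classical
  have hcoeff : coeff (e s) (φ q) = coeff s q := by
    conv_lhs => rw [q.as_sum, map_sum, coeff_sum]
    rw [Finset.sum_eq_single_of_mem s hs fun t ht hts => ?_, hφ, coeff_monomial, if_pos rfl]
    rw [hφ, coeff_monomial, if_neg fun h => hts (he ht hs h)]
  rw [mem_support_iff, hcoeff]
  exact mem_support_iff.mp hs

variable (K : Type*) [Field K] {n : ℕ} {G : SimpleGraph (Fin n)} {A B : Finset (Fin n)}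

lemma coverExponent_mem_support_reesLift (hG : G.IsBipartiteWith (A : Set (Fin n)) B)
    {q : MvPolynomial (BasicOneCover G) K} (hq : q ∈ restrictSupport K {s | IsStandard A s})
    {s : BasicOneCover G →₀ ℕ} (hs : s ∈ q.support) :
    coverExponent (coverSum s) s.degree ∈ (reesLift K G q : St K n).support := by
  rw [mem_restrictSupport_iff] at hq
  refine mem_support_map_of_injOn
    (φ := AddMonoidHomClass.toAddMonoidHom ((symbolicRees K G).val.comp (reesLift K G)))
    (e := fun s : BasicOneCover G →₀ ℕ => coverExponent (coverSum s) s.degree)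
    (coe_reesLift_monomial K) (fun t ht u hu htu => ?_) hs
  obtain ⟨hsum, hdeg⟩ := coverExponent_inj.mp htu
  exact (hq ht).eq_of_coverSum_eq hG (hq hu) hdeg hsum

lemma eq_zero_of_mem_restrictSupport_of_mem_ker_Phi
    (hG : G.IsBipartiteWith (A : Set (Fin n)) B) {q : MvPolynomial (BasicOneCover G) K}
    (hstd : q ∈ restrictSupport K {s | IsStandard A s})
    (hq : q ∈ RingHom.ker (Phi K G).toRingHom) : q = 0 := by
  rw [← support_eq_empty, Finset.eq_empty_iff_forall_notMem]
  intro s hs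
  have hbasic : IsBasicCover G s.degree (coverSum s) :=
    IsStandard.isBasicCover_coverSum hG ((mem_restrictSupport_iff K).mp hstd hs)
  exact not_isBasicCover_of_mem_support ((mem_ker_Phi K).mp hq)
    (coverExponent_mem_support_reesLift K hG hstd hs) hbasic

end Independence

/-- Let `G` be a bipartite graph. The kernel of the presentation
`Φ : K[P(G)] → Ā(G)` is generated by the straightening relations. -/
theorem ker_Phi_eq_span_straighteningRelations (K : Type*) [Field K] {n : ℕ}
    (G : SimpleGraph (Fin n)) (A : Finset (Fin n))
    (hbip : ∀ i j : Fin n, G.Adj i j → (i ∈ A ↔ j ∉ A))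
    (hcard : A.card ≤ Aᶜ.card)
    (hiso : ∀ v : Fin n, ∃ w, G.Adj v w) :
    RingHom.ker (Phi K G).toRingHom = Ideal.span (straighteningRelations K G A) := by
  have hG := isBipartiteWith_compl hbip
  have hle := span_straighteningRelations_le_ker_Phi K hG
  refine le_antisymm (fun p hp => ?_) hle
  obtain ⟨r, hr, q, hstd, rfl⟩ : ∃ r ∈ Ideal.span (straighteningRelations K G A),
      ∃ q ∈ restrictSupport K {s | IsStandard A s}, r + q = p :=
    Submodule.mem_sup.mp
      (span_straighteningRelations_sup_restrictSupport_eq_top K ▸ Submodule.mem_top)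
  have hq : q ∈ RingHom.ker (Phi K G).toRingHom := (Ideal.add_mem_iff_right _ (hle hr)).mp hp
  rwa [eq_zero_of_mem_restrictSupport_of_mem_ker_Phi K hG hstd hq, add_zero]
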